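/- Let β ≥ 0, let f : ℝ≥0 → ℝ≥0 be strictly increasing with f(0) = 0, and let n, s be naturals with n − s ≥ 5 and n − s odd. Define X(n,s) = 2β/(n−s−1) − (1 − 2/(n−s−1))·f(n−s−2). Then X(n,s) − A(n,(n−s−3)/2,s) = 2·(f(n−s−1) − f(n−s−2))·(f(n−s−2)+β)·(n−s−3) / ( (n−s−1)·( f(n−s−1)·(n−s−3) + 2·f(n−s−2) + β·(n−s−1) ) ); in particular X(n,s) > A(n,(n−s−3)/2,s). -/

import Mathlib

open scoped NNReal

noncomputable section

/-- T(n,s) = (n−s−3)·f(n−s−1) − (n−s−2)·f(n−s−2). -/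
def Tval (f : ℝ≥0 → ℝ≥0) (n s : ℕ) : ℝ :=
  ((n : ℝ) - s - 3) * ((f ((n - s - 1 : ℕ) : ℝ≥0) : ℝ≥0) : ℝ)
    - ((n : ℝ) - s - 2) * ((f ((n - s - 2 : ℕ) : ℝ≥0) : ℝ≥0) : ℝ)

/-- D₁ = f(n−s−1)+β. -/
def D1val (β : ℝ) (f : ℝ≥0 → ℝ≥0) (n s : ℕ) : ℝ :=
  ((f ((n - s - 1 : ℕ) : ℝ≥0) : ℝ≥0) : ℝ) + β

/-- D₂ = f(n−s−2)+β. -/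
def D2val (β : ℝ) (f : ℝ≥0 → ℝ≥0) (n s : ℕ) : ℝ :=
  ((f ((n - s - 2 : ℕ) : ℝ≥0) : ℝ≥0) : ℝ) + β

/-- A(n,m,s), with `m` a real variable. -/
def Aval (β : ℝ) (f : ℝ≥0 → ℝ≥0) (n : ℕ) (m : ℝ) (s : ℕ) : ℝ :=
  (D1val β f n s * D2val β f n s / (3 * D1val β f n s - 2 * D2val β f n s)) *
      (3 * (β - Tval f n s) /
          (m * (3 * D1val β f n s - 2 * D2val β f n s) + ((n : ℝ) - s) * D2val β f n s) - 1)
    + β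

/-- B(s) = β/s − ((s−1)/s)·f(1). -/
def Bval (β : ℝ) (f : ℝ≥0 → ℝ≥0) (s : ℕ) : ℝ :=
  β / (s : ℝ) - (((s : ℝ) - 1) / (s : ℝ)) * ((f 1 : ℝ≥0) : ℝ)

/-- Q(n,m,s). -/
def Qval (β : ℝ) (f : ℝ≥0 → ℝ≥0) (n : ℕ) (m : ℝ) (s : ℕ) : ℝ :=
  if Aval β f n m s > -((f 1 : ℝ≥0) : ℝ) then
    (Aval β f n m s * Bval β f s - ((f 1 : ℝ≥0) : ℝ) * ((f ((n - s : ℕ) : ℝ≥0) : ℝ≥0) : ℝ)) /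
      (Aval β f n m s + Bval β f s + ((f 1 : ℝ≥0) : ℝ) + ((f ((n - s : ℕ) : ℝ≥0) : ℝ≥0) : ℝ))
  else Aval β f n m s

/-!
In terms of `D₁`, `D₂` and `k = n - s` one has `β - T = (k - 2) D₂ - (k - 3) D₁`, so that the
factor `3 D₁ - 2 D₂` cancels from `A`:
`A(n, m, s) = β - (m + k - 3) D₁ D₂ / (m (3 D₁ - 2 D₂) + k D₂)`.
At `m = (k - 3) / 2` the fraction is `(k - 3) D₁ D₂ / ((k - 3) D₁ + 2 D₂)`, whereas
`X = β - (k - 3) D₂ / (k - 1)`. The difference is governed by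
`(k - 1) D₁ - ((k - 3) D₁ + 2 D₂) = 2 (D₁ - D₂)`, which is positive as soon as `D₂ < D₁`.
-/

/-- The quantity `X(n, s)` to which `A(n, (n - s - 3) / 2, s)` is compared. As in `Tval`, the
coefficients are formed in `ℝ`, while the argument of `f` is a truncated difference in `ℕ`. -/
def Xval (β : ℝ) (f : ℝ≥0 → ℝ≥0) (n s : ℕ) : ℝ :=
  2 * β / ((n : ℝ) - s - 1) -
    (1 - 2 / ((n : ℝ) - s - 1)) * ((f ((n - s - 2 : ℕ) : ℝ≥0) : ℝ≥0) : ℝ)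

section

variable {β : ℝ} {f : ℝ≥0 → ℝ≥0} {n s : ℕ}

theorem sub_Tval :
    β - Tval f n s =
      ((n : ℝ) - s - 2) * D2val β f n s - ((n : ℝ) - s - 3) * D1val β f n s := by
  unfold Tval D1val D2val
  ring

theorem Aval_eq_sub_div {m : ℝ} (hc : 3 * D1val β f n s - 2 * D2val β f n s ≠ 0)
    (hd : m * (3 * D1val β f n s - 2 * D2val β f n s) + ((n : ℝ) - s) * D2val β f n s ≠ 0) :
    Aval β f n m s =
      β - (m + ((n : ℝ) - s - 3)) * (D1val β f n s * D2val β f n s) /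
        (m * (3 * D1val β f n s - 2 * D2val β f n s) + ((n : ℝ) - s) * D2val β f n s) := by
  unfold Aval
  rw [sub_Tval]
  generalize D1val β f n s = D₁ at *
  generalize D2val β f n s = D₂ at *
  have numerator_eq :
      3 * (((n : ℝ) - s - 2) * D₂ - ((n : ℝ) - s - 3) * D₁) -
          (m * (3 * D₁ - 2 * D₂) + ((n : ℝ) - s) * D₂) =
        -((3 * D₁ - 2 * D₂) * (m + ((n : ℝ) - s - 3))) := by
    ring
  rw [div_sub_one hd, numerator_eq, neg_div, mul_neg, neg_add_eq_sub, div_mul_div_comm,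
    mul_left_comm, mul_div_mul_left _ _ hc, mul_comm (D₁ * D₂)]

theorem Aval_half_eq_sub_div (hc : 3 * D1val β f n s - 2 * D2val β f n s ≠ 0)
    (hd : ((n : ℝ) - s - 3) * D1val β f n s + 2 * D2val β f n s ≠ 0) :
    Aval β f n (((n : ℝ) - s - 3) / 2) s =
      β - ((n : ℝ) - s - 3) * (D1val β f n s * D2val β f n s) /
        (((n : ℝ) - s - 3) * D1val β f n s + 2 * D2val β f n s) := by
  have denominator_eq :
      ((n : ℝ) - s - 3) / 2 * (3 * D1val β f n s - 2 * D2val β f n s) +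
          ((n : ℝ) - s) * D2val β f n s =
        3 / 2 * (((n : ℝ) - s - 3) * D1val β f n s + 2 * D2val β f n s) := by
    ring
  have numerator_eq :
      (((n : ℝ) - s - 3) / 2 + ((n : ℝ) - s - 3)) * (D1val β f n s * D2val β f n s) =
        3 / 2 * (((n : ℝ) - s - 3) * (D1val β f n s * D2val β f n s)) := by
    ring
  have three_halves_ne_zero : (3 / 2 : ℝ) ≠ 0 := by norm_num
  rw [Aval_eq_sub_div hc (denominator_eq ▸ mul_ne_zero three_halves_ne_zero hd),
    denominator_eq, numerator_eq, mul_div_mul_left _ _ three_halves_ne_zero]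

theorem Xval_eq_sub_div (h : (n : ℝ) - s - 1 ≠ 0) :
    Xval β f n s = β - ((n : ℝ) - s - 3) * D2val β f n s / ((n : ℝ) - s - 1) := by
  unfold Xval D2val
  field_simp
  ring

theorem Xval_sub_Aval_half (h : (n : ℝ) - s - 1 ≠ 0)
    (hc : 3 * D1val β f n s - 2 * D2val β f n s ≠ 0)
    (hd : ((n : ℝ) - s - 3) * D1val β f n s + 2 * D2val β f n s ≠ 0) :
    Xval β f n s - Aval β f n (((n : ℝ) - s - 3) / 2) s =
      2 * (D1val β f n s - D2val β f n s) * D2val β f n s * ((n : ℝ) - s - 3) /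
        (((n : ℝ) - s - 1) * (((n : ℝ) - s - 3) * D1val β f n s + 2 * D2val β f n s)) := by
  rw [Xval_eq_sub_div h, Aval_half_eq_sub_div hc hd, sub_sub_sub_cancel_left, div_sub_div _ _ hd h]
  ring

theorem D2val_lt_D1val (hf : StrictMono f) (h : s + 2 ≤ n) :
    D2val β f n s < D1val β f n s := by
  have : f ((n - s - 2 : ℕ) : ℝ≥0) < f ((n - s - 1 : ℕ) : ℝ≥0) :=
    hf (Nat.cast_lt.2 (by lia))
  exact add_lt_add_left (NNReal.coe_lt_coe.2 this) β

theorem D2val_pos (hβ : 0 ≤ β) (hf : StrictMono f) (h : s + 2 < n) : 0 < D2val β f n s := by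
  have : 0 < f ((n - s - 2 : ℕ) : ℝ≥0) :=
    pos_of_gt (hf (Nat.cast_pos.2 (by lia : 0 < n - s - 2)))
  exact add_pos_of_pos_of_nonneg (NNReal.coe_pos.2 this) hβ

end

theorem stmt18_general (β : ℝ) (f : ℝ≥0 → ℝ≥0) (n s : ℕ) (hns : s + 3 < n)
    (hD₂ : 0 < D2val β f n s) (hD : D2val β f n s < D1val β f n s)
    (X f1 f2 : ℝ)
    (hf1 : f1 = ((f ((n - s - 1 : ℕ) : ℝ≥0) : ℝ≥0) : ℝ))
    (hf2 : f2 = ((f ((n - s - 2 : ℕ) : ℝ≥0) : ℝ≥0) : ℝ))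
    (hX : X = 2 * β / ((n : ℝ) - s - 1) - (1 - 2 / ((n : ℝ) - s - 1)) * f2) :
    X - Aval β f n (((n : ℝ) - s - 3) / 2) s
        = 2 * (f1 - f2) * (f2 + β) * ((n : ℝ) - s - 3) /
            (((n : ℝ) - s - 1) * (f1 * ((n : ℝ) - s - 3) + 2 * f2 + β * ((n : ℝ) - s - 1))) ∧
      Aval β f n (((n : ℝ) - s - 3) / 2) s < X := by
  obtain rfl : X = Xval β f n s := by rw [hX, hf2, Xval]
  have hk : (0 : ℝ) < n - s - 3 := by
    have : (s : ℝ) + 3 < n := mod_cast hns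
    linarith
  have hk₁ : (0 : ℝ) < n - s - 1 := by linarith
  have hD₁ : 0 < D1val β f n s := hD₂.trans hD
  have hd : 0 < ((n : ℝ) - s - 3) * D1val β f n s + 2 * D2val β f n s := by positivity
  have difference_eq := Xval_sub_Aval_half hk₁.ne' (by linarith) hd.ne'
  constructor
  · rw [difference_eq, hf1, hf2]
    unfold D1val D2val
    congr 1 <;> ring
  · rw [← sub_pos, difference_eq]
    have := sub_pos.2 hD
    positivity

theorem stmt18 (β : ℝ) (hβ : 0 ≤ β)
    (f : ℝ≥0 → ℝ≥0) (hf : StrictMono f) (hf0 : f 0 = 0)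
    (n s : ℕ) (h5 : s + 5 ≤ n) (hodd : Odd (n - s))
    (X f1 f2 : ℝ)
    (hf1 : f1 = ((f ((n - s - 1 : ℕ) : ℝ≥0) : ℝ≥0) : ℝ))
    (hf2 : f2 = ((f ((n - s - 2 : ℕ) : ℝ≥0) : ℝ≥0) : ℝ))
    (hX : X = 2 * β / ((n : ℝ) - s - 1) - (1 - 2 / ((n : ℝ) - s - 1)) * f2) :
    X - Aval β f n (((n : ℝ) - s - 3) / 2) s
        = 2 * (f1 - f2) * (f2 + β) * ((n : ℝ) - s - 3) /
            (((n : ℝ) - s - 1) * (f1 * ((n : ℝ) - s - 3) + 2 * f2 + β * ((n : ℝ) - s - 1))) ∧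
      Aval β f n (((n : ℝ) - s - 3) / 2) s < X := by
  exact stmt18_general β f n s (by lia) (D2val_pos hβ hf (by lia)) (D2val_lt_D1val hf (by lia))
    X f1 f2 hf1 hf2 hX
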